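/- arXiv:2604.07227 — 2 statements merged into one kernel-verified Lean document; each statement's English description precedes it below -/
import Mathlib

section
/- Let α ∈ [0,1] and let (R_n)_{n≥1} be the elephant polynomials with parameter α. Then for every n ≥ 1 there exist unique non-negative numbers λ_{n,k}, k = 0,1,…,⌊n/2⌋, such that R_n(x) = Σ_{k=0}^{⌊n/2⌋} (−1)^k·λ_{n,k}·x^{n−2k}·(1−x²)^k for all x ∈ ℝ, and moreover these coefficients satisfy e^{−(1−α)n/(3+α)}·C(n,2k)·α^k ≤ λ_{n,k} ≤ C(n,2k)·α^k for all n ≥ 1 and k ∈ {0,1,…,⌊n/2⌋}, where C(n,2k) denotes the binomial coefficient. -/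
open Polynomial

/-- The elephant polynomials: `R_1(x) = x` and
`R_{n+1}(x) = x R_n(x) - (α/n)(1 - x²) R_n'(x)` for `n ≥ 1`. -/
noncomputable def elephantPoly (α : ℝ) : ℕ → Polynomial ℝ
  | 0 => 1
  | 1 => Polynomial.X
  | n + 2 =>
      Polynomial.X * elephantPoly α (n + 1)
        - Polynomial.C (α / (n + 1)) *
            ((1 - Polynomial.X ^ 2) * Polynomial.derivative (elephantPoly α (n + 1)))

noncomputable def P6 (n m : ℝ) : ℝ := 24*n+2*n*m^2-m^3+3*m*n-12*m

noncomputable def Qp (n s : ℝ) : ℝ :=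
  (s^2-(n+1)) * P6 n (s+1) - (n+1+s)*(n+1+s-2)/4*(P6 n (s+1)-P6 n (s-3))
    + 5/2 * (n+1)*(n-1/3)*n^2

theorem P6_nonneg (n m : ℝ) (hn : 3 ≤ n) (hm : m ≤ n + 2) : 0 ≤ P6 n m := by
  unfold P6
  have h1 : 0 ≤ m^2 * (n + 2 - m) := mul_nonneg (sq_nonneg _) (by linarith)
  nlinarith [sq_nonneg (m+1), sq_nonneg (m-1), mul_nonneg (sub_nonneg.2 hn) (sq_nonneg (m+1)), mul_nonneg (sub_nonneg.2 hn) (sq_nonneg (m)), sq_nonneg m]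

theorem C0 (n s : ℝ) (hn : 3 ≤ n)  : 0 ≤ 3*s^4*(n+1) - s^3*(5*n+6)+ s^2*(-14*n^2+2*n+16)+ s*(15*n^2+33*n+6) + 29*n^3+15*n^2-33*n-19 := by
  obtain ⟨x, rfl⟩ : ∃ x, n = 3 + x := ⟨n-3, by ring⟩
  have hx : 0 ≤ x := by linarith
  nlinarith [sq_nonneg (s^2 - 7/3*(3+x)-s+1), mul_nonneg hx (sq_nonneg (s^2 - 7/3*(3+x))), mul_nonneg hx (sq_nonneg (s^2 - 7/3*(3+x)-s)), mul_nonneg hx (sq_nonneg (s)), mul_nonneg hx (sq_nonneg (s+1)), mul_nonneg hx (mul_nonneg hx hx), mul_nonneg hx (sq_nonneg (s+x)),mul_nonneg hx (sq_nonneg (s-x)), sq_nonneg (s+1), sq_nonneg (s-1)]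

theorem Qpos_0 (y u v : ℝ) (hy : 0 ≤ y) (hu : 0 ≤ u) (hv : 0 ≤ v) (huv : u + v = 1) :
    0 ≤ Qp (3 + y) ((-4/3 + 2/3*u) * (3 + y)) := by
  have h : 0 ≤ y^0*(2184*u^0*v^5 + 6176*u^1*v^4 + 7248*u^2*v^3 + 4560*u^3*v^2 + 1576*u^4*v^1 + 240*u^5*v^0)
      + y^1*(10268/3*u^0*v^5 + 29228/3*u^1*v^4 + 35396/3*u^2*v^3 + 23740/3*u^3*v^2 + 8944/3*u^4*v^1 + 1480/3*u^5*v^0)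
      + y^2*(38435/18*u^0*v^5 + 105827/18*u^1*v^4 + 61555/9*u^2*v^3 + 39839/9*u^3*v^2 + 29479/18*u^4*v^1 + 4879/18*u^5*v^0)
      + y^3*(6362/9*u^0*v^5 + 50768/27*u^1*v^4 + 18424/9*u^2*v^3 + 10796/9*u^3*v^2 + 10762/27*u^4*v^1 + 548/9*u^5*v^0)
      + y^4*(21013/162*u^0*v^5 + 56089/162*u^1*v^4 + 29741/81*u^2*v^3 + 16021/81*u^3*v^2 + 9089/162*u^4*v^1 + 1133/162*u^5*v^0)
      + y^5*(2560/243*u^0*v^5 + 7168/243*u^1*v^4 + 7936/243*u^2*v^3 + 4352/243*u^3*v^2 + 1184/243*u^4*v^1 + 128/243*u^5*v^0) := by positivity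
  obtain rfl : v = 1 - u := by linarith
  refine h.trans_eq ?_
  unfold Qp P6
  ring

theorem Qpos_1 (y u v : ℝ) (hy : 0 ≤ y) (hu : 0 ≤ u) (hv : 0 ≤ v) (huv : u + v = 1) :
    0 ≤ Qp (3 + y) ((-2/3 + 2/3*u) * (3 + y)) := by
  have h : 0 ≤ y^0*(240*u^0*v^5 + 824*u^1*v^4 + 1552*u^2*v^3 + 1488*u^3*v^2 + 672*u^4*v^1 + 120*u^5*v^0)
      + y^1*(1480/3*u^0*v^5 + 1952*u^1*v^4 + 3796*u^2*v^3 + 3596*u^3*v^2 + 1572*u^4*v^1 + 260*u^5*v^0)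
      + y^2*(4879/18*u^0*v^5 + 6437/6*u^1*v^4 + 2167*u^2*v^3 + 2099*u^3*v^2 + 1835/2*u^4*v^1 + 889/6*u^5*v^0)
      + y^3*(548/9*u^0*v^5 + 5678/27*u^1*v^4 + 12052/27*u^2*v^3 + 4096/9*u^3*v^2 + 608/3*u^4*v^1 + 98/3*u^5*v^0)
      + y^4*(1133/162*u^0*v^5 + 83/6*u^1*v^4 + 775/27*u^2*v^3 + 293/9*u^3*v^2 + 91/6*u^4*v^1 + 5/2*u^5*v^0)
      + y^5*(128/243*u^0*v^5 + 32/81*u^1*v^4) := by positivity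
  obtain rfl : v = 1 - u := by linarith
  refine h.trans_eq ?_
  unfold Qp P6
  ring

theorem Qpos_2 (y u v : ℝ) (hy : 0 ≤ y) (hu : 0 ≤ u) (hv : 0 ≤ v) (huv : u + v = 1) :
    0 ≤ Qp (3 + y) ((0 + 2/3*u) * (3 + y)) := by
  have h : 0 ≤ y^0*(120*u^0*v^5 + 528*u^1*v^4 + 912*u^2*v^3 + 848*u^3*v^2 + 568*u^4*v^1 + 192*u^5*v^0)
      + y^1*(260*u^0*v^5 + 1028*u^1*v^4 + 1420*u^2*v^3 + 852*u^3*v^2 + 416*u^4*v^1 + 488/3*u^5*v^0)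
      + y^2*(889/6*u^0*v^5 + 3385/6*u^1*v^4 + 2057/3*u^2*v^3 + 781/3*u^3*v^2 + 517/6*u^4*v^1 + 1079/18*u^5*v^0)
      + y^3*(98/3*u^0*v^5 + 124*u^1*v^4 + 1264/9*u^2*v^3 + 908/27*u^3*v^2 + 382/27*u^4*v^1 + 160/9*u^5*v^0)
      + y^4*(5/2*u^0*v^5 + 59/6*u^1*v^4 + 101/9*u^2*v^3 + 71/27*u^3*v^2 + 235/54*u^4*v^1 + 589/162*u^5*v^0)
      + y^5*(32/81*u^4*v^1 + 64/243*u^5*v^0) := by positivity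
  obtain rfl : v = 1 - u := by linarith
  refine h.trans_eq ?_
  unfold Qp P6
  ring

theorem Qpos_3 (y u v : ℝ) (hy : 0 ≤ y) (hu : 0 ≤ u) (hv : 0 ≤ v) (huv : u + v = 1) :
    0 ≤ Qp (3 + y) ((2/3 + 2/3*u) * (3 + y)) := by
  have h : 0 ≤ y^0*(192*u^0*v^5 + 1352*u^1*v^4 + 3984*u^2*v^3 + 5904*u^3*v^2 + 4240*u^4*v^1 + 1128*u^5*v^0)
      + y^1*(488/3*u^0*v^5 + 3632/3*u^1*v^4 + 12092/3*u^2*v^3 + 20164/3*u^3*v^2 + 15820/3*u^4*v^1 + 4444/3*u^5*v^0)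
      + y^2*(1079/18*u^0*v^5 + 9239/18*u^1*v^4 + 17719/9*u^2*v^3 + 32435/9*u^3*v^2 + 53707/18*u^4*v^1 + 15475/18*u^5*v^0)
      + y^3*(160/9*u^0*v^5 + 4418/27*u^1*v^4 + 5684/9*u^2*v^3 + 1144*u^3*v^2 + 25252/27*u^4*v^1 + 2386/9*u^5*v^0)
      + y^4*(589/162*u^0*v^5 + 5185/162*u^1*v^4 + 9173/81*u^2*v^3 + 15469/81*u^3*v^2 + 23993/162*u^4*v^1 + 6485/162*u^5*v^0)
      + y^5*(64/243*u^0*v^5 + 544/243*u^1*v^4 + 1792/243*u^2*v^3 + 2816/243*u^3*v^2 + 2048/243*u^4*v^1 + 512/243*u^5*v^0) := by positivity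
  obtain rfl : v = 1 - u := by linarith
  refine h.trans_eq ?_
  unfold Qp P6
  ring

theorem Qpos (n s : ℝ) (hn : 3 ≤ n) (h1 : s ≤ n+1) (h2 : -(n+1) ≤ s) : 0 ≤ Qp n s := by
  obtain ⟨x, rfl⟩ : ∃ x, s = x * n := ⟨s / n, by field_simp⟩
  have hx1 : x ≤ 4/3 := by
    by_contra h
    push Not at h
    nlinarith
  have hx2 : -(4/3) ≤ x := by
    by_contra h
    push Not at h
    nlinarith
  have hy : 0 ≤ n - 3 := by linarith
  have e : n = 3 + (n - 3) := by ring
  rw [e]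
  rcases le_total x 0 with h0 | h0
  · rcases le_total x (-2/3) with h | h
    · have := Qpos_0 (n-3) ((x+4/3)*(3/2)) (1 - (x+4/3)*(3/2)) hy (by linarith) (by linarith) (by ring)
      convert this using 2
      ring
    · have := Qpos_1 (n-3) ((x+2/3)*(3/2)) (1 - (x+2/3)*(3/2)) hy (by linarith) (by linarith) (by ring)
      convert this using 2
      ring
  · rcases le_total x (2/3) with h | h
    · have := Qpos_2 (n-3) (x*(3/2)) (1 - x*(3/2)) hy (by linarith) (by linarith) (by ring)
      convert this using 2
      ring
    · have := Qpos_3 (n-3) ((x-2/3)*(3/2)) (1 - (x-2/3)*(3/2)) hy (by linarith) (by linarith) (by ring)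
      convert this using 2
      ring

noncomputable def Hh (n m : ℝ) : ℝ := P6 n m / (6 * n^2)

/-- one step of the analytic lower bound -/
theorem step_ineq (n j t : ℝ) (hn : 3 ≤ n) (ht0 : 0 ≤ t) (ht : t ≤ 1/3) (hj0 : 0 ≤ j)
    (hjn : j ≤ n + 1) (hjj : 0 ≤ j * (j - 1)) :
    n * (n+1) * (1 + t * Hh (n+1) (2*j-(n+1))) ≤ (1 + 5/12 * t^2) *
      ((n+1-j) * ((1+t)*n+(1-3*t)*j) * (1 + t * Hh n (2*j-n))
        + (1+t) * (j*(j-1)) * (1 + t * Hh n (2*(j-2)-n))) := by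
  obtain ⟨s, rfl⟩ : ∃ s, j = (s + n + 1)/2 := ⟨2*j-n-1, by ring⟩
  have e1 : 2*((s + n + 1)/2)-(n+1) = s := by ring
  have e2 : 2*((s + n + 1)/2)-n = s+1 := by ring
  have e3 : 2*((s + n + 1)/2-2)-n = s-3 := by ring
  rw [e1, e2, e3]
  have h1 : s ≤ n + 1 := by linarith
  have h2 : -(n+1) ≤ s := by linarith
  have n0 : 0 < n := by linarith
  have q := Qpos n s hn h1 h2
  have c := C0 n s hn
  have p1 : 0 ≤ Hh n (s+1) := div_nonneg (P6_nonneg n _ hn (by linarith)) (by positivity)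
  have p2 : 0 ≤ Hh n (s-3) := div_nonneg (P6_nonneg n _ hn (by linarith)) (by positivity)
  have hC0 : n * (n+1) * Hh (n+1) s ≤ (s^2-(n+1)) + (n+1-s)*(3*n+1+s)/4 * Hh n (s+1)
      + (n+1+s)*(n+1+s-2)/4 * Hh n (s-3) := by
    rw [← sub_nonneg]
    have : (s^2-(n+1)) + (n+1-s)*(3*n+1+s)/4 * Hh n (s+1)
      + (n+1+s)*(n+1+s-2)/4 * Hh n (s-3) - n * (n+1) * Hh (n+1) s =
      (3*s^4*(n+1) - s^3*(5*n+6)+ s^2*(-14*n^2+2*n+16)+ s*(15*n^2+33*n+6) + 29*n^3+15*n^2-33*n-19) / (6*n^2*(n+1)) := by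
      unfold Hh P6
      field_simp
      ring
    rw [this]
    positivity
  have hC1 : 0 ≤ (s^2-(n+1)) * Hh n (s+1) - (n+1+s)*(n+1+s-2)/4*(Hh n (s+1)-Hh n (s-3))
    + 5/12 * (n+1)*(n-1/3) := by
    have : (s^2-(n+1)) * Hh n (s+1) - (n+1+s)*(n+1+s-2)/4*(Hh n (s+1)-Hh n (s-3))
      + 5/12 * (n+1)*(n-1/3) = Qp n s / (6*n^2) := by
      unfold Hh Qp
      field_simp
      ring
    rw [this]
    positivity
  generalize Hh (n+1) s = X at *
  generalize Hh n (s+1) = Y at *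
  generalize Hh n (s-3) = Z at *
  set W := (n+1-(s + n + 1)/2) * ((1+t)*n+(1-3*t)*((s + n + 1)/2)) * (1 + t * Y)
        + (1+t) * ((s + n + 1)/2*((s + n + 1)/2-1)) * (1 + t * Z) with hW
  have hA : 0 ≤ (n+1-(s + n + 1)/2) * ((1+t)*n+(1-3*t)*((s + n + 1)/2)) := by
    apply mul_nonneg (by linarith)
    have : 0 ≤ (1-3*t)*((s + n + 1)/2) := mul_nonneg (by linarith) hj0
    positivity
  have hB : 0 ≤ (1+t) * ((s + n + 1)/2*((s + n + 1)/2-1)) := mul_nonneg (by linarith) hjj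
  have hW1 : (n+1)*(n-1/3) ≤ W := by
    have a1 := mul_nonneg hA (mul_nonneg ht0 p1)
    have a2 := mul_nonneg hB (mul_nonneg ht0 p2)
    have a3 : W = n*(n+1) + t*(s^2-(n+1)) + (n+1-(s + n + 1)/2) * ((1+t)*n+(1-3*t)*((s + n + 1)/2)) * (t * Y)
        + (1+t) * ((s + n + 1)/2*((s + n + 1)/2-1)) * (t * Z) := by rw [hW]; ring
    have a4 : 0 ≤ t * s^2 := by positivity
    have a5 : t * (n+1) ≤ 1/3 * (n+1) := by gcongr
    linarith
  have hW2 : W = n*(n+1) + t * ((s^2-(n+1)) + (n+1-s)*(3*n+1+s)/4 * Y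
      + (n+1+s)*(n+1+s-2)/4 * Z) + t^2 * ((s^2-(n+1)) * Y - (n+1+s)*(n+1+s-2)/4*(Y-Z)) := by
    rw [hW]; ring
  have b1 := mul_le_mul_of_nonneg_left hC0 ht0
  have b2 := mul_nonneg (sq_nonneg t) hC1
  have b3 := mul_le_mul_of_nonneg_left hW1 (sq_nonneg t)
  clear_value W
  have e : (1 + 5/12 * t^2) * W = W + 5/12 * (t^2 * W) := by ring
  rw [e]
  linarith

noncomputable def lamL (α : ℝ) : ℕ → ℕ → ℝ
  | 0, k => if k = 0 then 1 else 0
  | 1, k => if k = 0 then 1 else 0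
  | n + 2, 0 => lamL α (n + 1) 0
  | n + 2, k + 1 => (1 + 2 * ((k : ℝ) + 1) * α / ((n : ℝ) + 1)) * lamL α (n + 1) (k + 1)
      + α * (((n : ℝ) + 1) - 2 * (k : ℝ)) / ((n : ℝ) + 1) * lamL α (n + 1) k

theorem lamL_succ_zero (α : ℝ) (n : ℕ) (hn : 1 ≤ n) : lamL α (n+1) 0 = lamL α n 0 := by
  obtain ⟨n, rfl⟩ : ∃ m, n = m + 1 := ⟨n - 1, by omega⟩
  rw [lamL]

theorem lamL_succ_succ (α : ℝ) (n k : ℕ) (hn : 1 ≤ n) : lamL α (n+1) (k+1) =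
    (1 + 2 * ((k : ℝ) + 1) * α / (n : ℝ)) * lamL α n (k + 1)
      + α * ((n : ℝ) - 2 * (k : ℝ)) / (n : ℝ) * lamL α n k := by
  obtain ⟨n, rfl⟩ : ∃ m, n = m + 1 := ⟨n - 1, by omega⟩
  rw [lamL]
  push_cast
  rfl

theorem lamL_zero (α : ℝ) (n : ℕ) (hn : 1 ≤ n) : lamL α n 0 = 1 := by
  induction n, hn using Nat.le_induction with
  | base => simp [lamL]
  | succ n hn ih => rw [lamL_succ_zero α n hn, ih]

theorem lamL_eq_zero (α : ℝ) (n : ℕ) (hn : 1 ≤ n) : ∀ k, n < 2 * k → lamL α n k = 0 := by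
  induction n, hn using Nat.le_induction with
  | base =>
    intro k hk
    rw [lamL, if_neg (by omega)]
  | succ n hn ih =>
    intro k hk
    obtain ⟨k, rfl⟩ : ∃ m, k = m + 1 := ⟨k - 1, by omega⟩
    rw [lamL_succ_succ α n k hn, ih (k+1) (by omega)]
    rcases Nat.lt_or_ge n (2*k) with h | h
    · rw [ih k h]; ring
    · have : (n : ℝ) = 2 * k := by
        have : n = 2 * k := by omega
        rw [this]; push_cast; ring
      rw [this]; ring

theorem binom_key (α a b : ℝ) (n k : ℕ) (hn : 1 ≤ n) (hk : 2 * k + 2 ≤ n + 1) :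
    (n : ℝ) * (n + 1) * ((1 + 2 * ((k : ℝ) + 1) * α / (n : ℝ)) * (a * (n.choose (2*(k+1))) * α^(k+1))
      + α * ((n : ℝ) - 2 * (k : ℝ)) / (n : ℝ) * (b * (n.choose (2*k)) * α^k)) =
    α^(k+1) * ((n+1).choose (2*(k+1))) * (((n : ℝ) + 1 - 2*(k+1)) * (n + α * (2*(k+1))) * a
      + (2*((k:ℝ)+1)) * (2*(k+1) - 1) * b) := by
  have hn' : (n : ℝ) ≠ 0 := by positivity
  have h1 : ((n : ℝ) + 1 - 2*(k+1)) * ((n+1).choose (2*(k+1)) : ℝ) = (n+1) * (n.choose (2*(k+1)) : ℝ) := by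
    have h := Nat.choose_mul_succ_eq n (2*(k+1))
    have h' : ((n.choose (2*(k+1)) * (n+1) : ℕ) : ℝ) = (((n+1).choose (2*(k+1)) * (n + 1 - 2*(k+1)) : ℕ) : ℝ) := by
      exact_mod_cast h
    rw [Nat.cast_mul, Nat.cast_mul, Nat.cast_sub (by omega)] at h'
    push_cast at h'
    linarith
  have h2 : (2*((k:ℝ)+1)) * (2*(k+1) - 1) * ((n+1).choose (2*(k+1)) : ℝ) =
      (n+1) * ((n.choose (2*k) : ℝ) * (n - 2 * k)) := by
    have e1 := Nat.add_one_mul_choose_eq n (2*k+1)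
    have e2 := Nat.choose_succ_right_eq n (2*k)
    have e1' : ((n : ℝ) + 1) * (n.choose (2*k+1)) = ((n+1).choose (2*(k+1))) * (2*k+1+1) := by
      exact_mod_cast e1
    have e2' : ((n.choose (2*k+1) * (2*k+1) : ℕ) : ℝ) = ((n.choose (2*k) * (n - 2*k) : ℕ) : ℝ) := by
      exact_mod_cast e2
    rw [Nat.cast_mul, Nat.cast_mul, Nat.cast_sub (by omega)] at e2'
    push_cast at e2'
    rw [← e2']
    linear_combination (-(2*(k:ℝ)+1)) * e1'
  have e : (n : ℝ) * (n + 1) * ((1 + 2 * ((k : ℝ) + 1) * α / (n : ℝ)) * (a * (n.choose (2*(k+1))) * α^(k+1))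
      + α * ((n : ℝ) - 2 * (k : ℝ)) / (n : ℝ) * (b * (n.choose (2*k)) * α^k)) =
      α^(k+1) * ((n + 2*(k+1)*α) * a * ((n+1) * (n.choose (2*(k+1)) : ℝ)) + b * ((n+1) * ((n.choose (2*k) : ℝ) * (n - 2 * k)))) := by
    field_simp
    ring
  rw [e, ← h1, ← h2]
  ring

/-- general comparison step -/
theorem lam_upper (α : ℝ) (h0 : 0 ≤ α) (h1 : α ≤ 1) (n : ℕ) (hn : 1 ≤ n) :
    ∀ k, 0 ≤ lamL α n k ∧ lamL α n k ≤ (n.choose (2*k)) * α^k := by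
  induction n, hn using Nat.le_induction with
  | base =>
    intro k
    rcases Nat.eq_zero_or_pos k with rfl | hk
    · simp [lamL]
    · have : Nat.choose 1 (2*k) = 0 := Nat.choose_eq_zero_of_lt (by omega)
      rw [lamL, if_neg (by omega), this]; simp
  | succ n hn ih =>
    intro k
    rcases k with _ | k
    · rw [lamL_zero α _ (by omega)]; simp
    rcases Nat.lt_or_ge (n+1) (2*(k+1)) with h | h
    · rw [lamL_eq_zero α _ (by omega) _ h, Nat.choose_eq_zero_of_lt h]; simp
    have hn0 : (0:ℝ) < n := by exact_mod_cast hn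
    have hk2 : (0:ℝ) ≤ n + 1 - 2*(k+1) := by
      have : ((2*(k+1) : ℕ) : ℝ) ≤ ((n+1 : ℕ) : ℝ) := by exact_mod_cast h
      push_cast at this; linarith
    have c1 : 0 ≤ 1 + 2 * ((k : ℝ) + 1) * α / (n : ℝ) := by positivity
    have c2 : 0 ≤ α * ((n : ℝ) - 2 * (k : ℝ)) / (n : ℝ) := by
      apply div_nonneg (mul_nonneg h0 (by linarith)) hn0.le
    rw [lamL_succ_succ α n k hn]
    refine ⟨add_nonneg (mul_nonneg c1 (ih _).1) (mul_nonneg c2 (ih _).1), ?_⟩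
    have key := binom_key α 1 1 n k hn (by omega)
    have u1 := mul_le_mul_of_nonneg_left (ih (k+1)).2 c1
    have u2 := mul_le_mul_of_nonneg_left (ih k).2 c2
    simp only [one_mul] at key
    refine (add_le_add u1 u2).trans ?_
    have hp : 0 < (n:ℝ) * (n+1) := by positivity
    refine le_of_mul_le_mul_left ?_ hp
    rw [key]
    have hq : 0 ≤ α^(k+1) * ((n+1).choose (2*(k+1)) : ℝ) := by positivity
    have : ((n : ℝ) + 1 - 2*(k+1)) * (n + α * (2*(k+1))) * 1
      + (2*((k:ℝ)+1)) * (2*(k+1) - 1) * 1 ≤ n * (n+1) := by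
      have : ((n : ℝ) + 1 - 2*(k+1)) * (α * (2*(k+1))) ≤ ((n : ℝ) + 1 - 2*(k+1)) * (1 * (2*(k+1))) := by
        gcongr
      nlinarith
    calc _ ≤ _ := mul_le_mul_of_nonneg_left this hq
      _ = _ := by ring

noncomputable def Gf (t n j : ℝ) : ℝ := Real.exp (-(t * n)) * (1 + t * Hh n (2*j-n))

theorem exp_key (t : ℝ) (h0 : 0 ≤ t) (h1 : t ≤ 1/3) : (1 + t) * (1 + 5/12*t^2) ≤ Real.exp t := by
  have h := Real.sum_le_exp_of_nonneg h0 4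
  simp [Finset.sum_range_succ, Nat.factorial] at h
  nlinarith [mul_nonneg (sq_nonneg t) (sub_nonneg.2 h1)]

theorem Gstep (n j t α : ℝ) (hα : α * (1 + t) = 1 - 3 * t) (hn : 3 ≤ n) (ht0 : 0 ≤ t) (ht : t ≤ 1/3) (hα0 : 0 ≤ α)
    (hj0 : 0 ≤ j) (hjn : j ≤ n + 1) (hjj : 0 ≤ j * (j - 1)) :
    n * (n+1) * Gf t (n+1) j ≤ (n+1-j) * (n + α * j) * Gf t n j + j*(j-1) * Gf t n (j-2) := by
  have S := step_ineq n j t hn ht0 ht hj0 hjn hjj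
  unfold Gf
  have e : Real.exp (-(t*(n+1))) = Real.exp (-(t*n)) * Real.exp (-t) := by
    rw [← Real.exp_add]; congr 1; ring
  have hp1 : 0 ≤ Hh n (2*j-n) := div_nonneg (P6_nonneg n _ hn (by linarith)) (by positivity)
  have hp2 : 0 ≤ Hh n (2*(j-2)-n) := div_nonneg (P6_nonneg n _ hn (by linarith)) (by positivity)
  rw [e]
  generalize Hh (n+1) (2*j-(n+1)) = X at *
  generalize Hh n (2*j-n) = Y at *
  generalize Hh n (2*(j-2)-n) = Z at *
  set V := (n+1-j) * (n + α * j) * (1 + t*Y) + j*(j-1) * (1+t*Z) with hV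
  have hV0 : 0 ≤ V := by
    have : 0 ≤ n + 1 - j := by linarith
    have : 0 ≤ n := by linarith
    rw [hV]; positivity
  have hS : (n+1-j) * ((1+t)*n+(1-3*t)*j) * (1 + t * Y) + (1+t) * (j*(j-1)) * (1 + t * Z) = (1+t) * V := by
    rw [hV, ← hα]; ring
  rw [hS] at S
  have h2 : n * (n+1) * (1 + t*X) ≤ Real.exp t * V := by
    calc _ ≤ _ := S
      _ = (1 + t) * (1 + 5/12*t^2) * V := by ring
      _ ≤ _ := mul_le_mul_of_nonneg_right (exp_key t ht0 ht) hV0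
  have h3 : Real.exp (-t) * (n * (n+1) * (1 + t*X)) ≤ V := by
    calc _ ≤ Real.exp (-t) * (Real.exp t * V) := mul_le_mul_of_nonneg_left h2 (Real.exp_pos _).le
      _ = V := by rw [← mul_assoc, ← Real.exp_add]; simp
  calc _ = Real.exp (-(t*n)) * (Real.exp (-t) * (n * (n+1) * (1 + t*X))) := by ring
    _ ≤ Real.exp (-(t*n)) * V := mul_le_mul_of_nonneg_left h3 (Real.exp_pos _).le
    _ = _ := by rw [hV]; ring

theorem lam_lower (α t : ℝ) (h0 : 0 ≤ α) (h1 : α ≤ 1) (hα : α * (1 + t) = 1 - 3 * t)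
    (ht0 : 0 ≤ t) (ht : t ≤ 1/3) (n : ℕ) (hn : 3 ≤ n) :
    ∀ k : ℕ, Gf t n (2*k) * (n.choose (2*k)) * α^k ≤ lamL α n k := by
  induction n, hn using Nat.le_induction with
  | base =>
    intro k
    have he : 1 + 3*t + 9/2*t^2 ≤ Real.exp (t*3) := by
      have h := Real.sum_le_exp_of_nonneg (x := t*3) (by positivity) 3
      simp [Finset.sum_range_succ, Nat.factorial] at h
      linarith
    have hpos := Real.exp_pos (t*3)
    rcases k with _ | _ | k
    · rw [lamL_zero α _ (by omega)]
      simp only [Gf, Hh, P6, Real.exp_neg]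
      norm_num
      rw [inv_mul_le_iff₀ hpos]
      nlinarith
    · have e : lamL α 3 1 = α * (2 + α) := by
        simp [lamL]; ring
      have hc : Nat.choose 3 2 = 3 := by decide
      rw [e]
      simp only [Gf, Hh, P6, Real.exp_neg]
      norm_num [hc]
      have : (Real.exp (t*3))⁻¹ * (1 + t * (37/27)) * 3 ≤ 2 + α := by
        rw [mul_assoc, inv_mul_le_iff₀ hpos]
        have h3 : (1 + t * (37/27)) * 3 * (1+t) ≤ (1 + 3*t + 9/2*t^2) * ((2 + α) * (1+t)) := by
          have : (2 + α) * (1+t) = 3 - t := by linarith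
          rw [this]
          nlinarith [mul_nonneg (sq_nonneg t) (sub_nonneg.2 ht)]
        have h4 : (1 + 3*t + 9/2*t^2) * ((2 + α) * (1+t)) ≤ Real.exp (t*3) * ((2 + α) * (1+t)) := by
          gcongr
        have h5 : 0 < 1 + t := by linarith
        refine le_of_mul_le_mul_right ?_ h5
        linarith
      nlinarith
    · rw [Nat.choose_eq_zero_of_lt (by omega), lamL_eq_zero α _ (by omega) _ (by omega)]; simp
  | succ n hn ih =>
    intro k
    have hn3 : (3:ℝ) ≤ n := by exact_mod_cast hn
    have hn0 : (0:ℝ) < n := by linarith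
    have hp : 0 < (n:ℝ) * (n+1) := by positivity
    rcases k with _ | k
    · rw [lamL_succ_zero α n (by omega)]
      refine le_trans ?_ (ih 0)
      have G := Gstep n 0 t α hα hn3 ht0 ht h0 le_rfl (by linarith) (by simp)
      simp only [Nat.cast_zero, mul_zero, Nat.choose_zero_right, pow_zero, Nat.cast_one, mul_one]
      push_cast
      refine le_of_mul_le_mul_left ?_ hp
      linarith
    rcases Nat.lt_or_ge (n+1) (2*(k+1)) with h | h
    · rw [lamL_eq_zero α _ (by omega) _ h, Nat.choose_eq_zero_of_lt h]; simp
    have hk2 : (0:ℝ) ≤ n + 1 - 2*(k+1) := by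
      have : ((2*(k+1) : ℕ) : ℝ) ≤ ((n+1 : ℕ) : ℝ) := by exact_mod_cast h
      push_cast at this; linarith
    have c1 : 0 ≤ 1 + 2 * ((k : ℝ) + 1) * α / (n : ℝ) := by positivity
    have c2 : 0 ≤ α * ((n : ℝ) - 2 * (k : ℝ)) / (n : ℝ) := by
      apply div_nonneg (mul_nonneg h0 (by linarith)) hn0.le
    rw [lamL_succ_succ α n k (by omega)]
    have u1 := mul_le_mul_of_nonneg_left (ih (k+1)) c1
    have u2 := mul_le_mul_of_nonneg_left (ih k) c2
    refine le_trans ?_ (add_le_add u1 u2)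
    refine le_of_mul_le_mul_left ?_ hp
    rw [binom_key α _ _ n k (by omega) (by omega)]
    have hk0 : (0:ℝ) ≤ k := Nat.cast_nonneg k
    have G := Gstep n (2*(k+1)) t α hα hn3 ht0 ht h0 (by positivity) (by linarith)
      (mul_nonneg (by positivity) (by linarith))
    have e : 2*((k:ℝ)+1) - 2 = 2 * k := by ring
    rw [e] at G
    have hq : 0 ≤ α^(k+1) * ((n+1).choose (2*(k+1)) : ℝ) := by positivity
    have := mul_le_mul_of_nonneg_left G hq
    push_cast
    refine le_trans (le_of_eq ?_) this
    ring

open Polynomial in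
theorem term_step (α : ℝ) (n k : ℕ) (hn : 1 ≤ n) (hk : 2 * k ≤ n) :
    (X * (X ^ (n - 2*k) * (1 - X^2)^k) - C (α / n) * ((1 - X^2) * derivative (X ^ (n - 2*k) * (1 - X^2)^k)) : ℝ[X]) =
    C (1 + 2 * k * α / n) * (X ^ (n + 1 - 2*k) * (1 - X^2)^k)
      - C (α * (n - 2*k) / n) * (X ^ (n + 1 - 2*(k+1)) * (1 - X^2)^(k+1)) := by
  obtain ⟨a, rfl⟩ : ∃ a, n = 2*k + a := ⟨n - 2*k, by omega⟩
  have hN : ((2*k+a : ℕ) : ℝ) ≠ 0 := by positivity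
  have e1 : 2*k + a - 2*k = a := by omega
  have e2 : 2*k + a + 1 - 2*k = a+1 := by omega
  have e3 : 2*k + a + 1 - 2*(k+1) = a-1 := by omega
  rw [e1, e2, e3]
  generalize hM : ((2*k+a : ℕ) : ℝ) = M at *
  have hM' : M - 2*k = a := by rw [← hM]; push_cast; ring
  rw [hM']
  have d : derivative ((X ^ a * (1 - X^2)^k : ℝ[X])) * (1 - X^2) =
      C (a:ℝ) * (X^(a-1) * (1-X^2)^(k+1)) - C (2 * (k:ℝ)) * (X^(a+1) * (1-X^2)^k) := by
    rcases k with _ | k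
    · simp [derivative_X_pow]; ring
    · simp [derivative_mul, derivative_pow]; ring
  have d2 : C (α / M) * ((1 - X^2) * derivative (X ^ a * (1 - X^2)^k : ℝ[X])) =
      C (α / M) * (C (a:ℝ) * (X^(a-1) * (1-X^2)^(k+1)) - C (2 * (k:ℝ)) * (X^(a+1) * (1-X^2)^k)) := by
    rw [← d]; ring
  rw [d2]
  have f1 : (1 + 2 * k * α / M) = 1 + α / M * (2 * k) := by ring
  have f2 : α * a / M = α / M * a := by ring
  rw [f1, f2, C_add, C_mul (a := α/M), C_mul (a := α/M), C_1]
  ring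

open Polynomial in
theorem expansion (α : ℝ) (n : ℕ) (hn : 1 ≤ n) : elephantPoly α n =
    ∑ k ∈ Finset.range (n+1), C ((-1)^k * lamL α n k) * (X ^ (n - 2*k) * (1 - X^2)^k) := by
  induction n, hn using Nat.le_induction with
  | base => simp [elephantPoly, Finset.sum_range_succ, lamL]
  | succ n hn ih =>
    have r : elephantPoly α (n+1) = X * elephantPoly α n - C (α / n) * ((1 - X^2) * derivative (elephantPoly α n)) := by
      obtain ⟨n, rfl⟩ : ∃ m, n = m + 1 := ⟨n - 1, by omega⟩
      rw [elephantPoly]; push_cast; rfl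
    rw [r, ih, derivative_sum, Finset.mul_sum, Finset.mul_sum, Finset.mul_sum, ← Finset.sum_sub_distrib]
    have s1 : ∀ k ∈ Finset.range (n+1), X * (C ((-1)^k * lamL α n k) * (X ^ (n - 2*k) * (1 - X^2)^k)) -
        C (α / n) * ((1 - X^2) * derivative (C ((-1)^k * lamL α n k) * (X ^ (n - 2*k) * (1 - X^2)^k))) =
        C ((-1)^k * (1 + 2 * k * α / n) * lamL α n k) * (X ^ (n + 1 - 2*k) * (1 - X^2)^k)
        + C ((-1)^(k+1) * (α * (n - 2*k) / n) * lamL α n k) * (X ^ (n + 1 - 2*(k+1)) * (1 - X^2)^(k+1)) := by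
      intro k _
      rcases Nat.lt_or_ge n (2*k) with h | h
      · rw [lamL_eq_zero α n hn k h]; simp
      · have T := term_step α n k hn h
        have : X * (C ((-1)^k * lamL α n k) * (X ^ (n - 2*k) * (1 - X^2)^k)) -
          C (α / n) * ((1 - X^2) * derivative (C ((-1)^k * lamL α n k) * (X ^ (n - 2*k) * (1 - X^2)^k))) =
          C ((-1)^k * lamL α n k) * (X * (X ^ (n - 2*k) * (1 - X^2)^k) - C (α / n) * ((1 - X^2) * derivative (X ^ (n - 2*k) * (1 - X^2)^k))) := by
          rw [derivative_C_mul]; ring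
        rw [this, T]
        simp only [pow_succ, C_mul, C_neg, C_1]
        ring
    rw [Finset.sum_congr rfl s1, Finset.sum_add_distrib]
    rw [Finset.sum_range_succ' (n := n+1)]
    have z : ∑ k ∈ Finset.range (n+1), C ((-1)^k * (1 + 2 * k * α / n) * lamL α n k) * (X ^ (n + 1 - 2*k) * (1 - X^2)^k : ℝ[X]) =
        ∑ k ∈ Finset.range (n+1), C ((-1)^(k+1) * (1 + 2 * ((k:ℝ)+1) * α / n) * lamL α n (k+1)) * (X ^ (n + 1 - 2*(k+1)) * (1 - X^2)^(k+1) : ℝ[X])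
        + C (lamL α n 0) * X^(n+1) := by
      have := Finset.sum_range_succ (fun k : ℕ => C ((-1)^k * (1 + 2 * k * α / n) * lamL α n k) * (X ^ (n + 1 - 2*k) * (1 - X^2)^k : ℝ[X])) (n+1)
      rw [lamL_eq_zero α n hn (n+1) (by omega)] at this
      simp only [mul_zero, C_0, zero_mul, add_zero] at this
      rw [← this, Finset.sum_range_succ']
      simp
    rw [z, add_right_comm, ← Finset.sum_add_distrib]
    congr 1
    · apply Finset.sum_congr rfl
      intro k _
      rw [lamL_succ_succ α n k hn, ← add_mul, ← C_add]
      congr 2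
      ring
    · rw [lamL_succ_zero α n hn]; simp

theorem uniq_aux (n : ℕ) (c : ℕ → ℝ) (h : ∀ x : ℝ, ∑ k ∈ Finset.range (n / 2 + 1),
    c k * x ^ (n - 2 * k) * (1 - x ^ 2) ^ k = 0) : ∀ k ≤ n / 2, c k = 0 := by
  set p : Polynomial ℝ := ∑ k ∈ Finset.range (n/2+1), Polynomial.monomial k (c k) with hp
  have hz : p = 0 := by
    apply Polynomial.eq_zero_of_infinite_isRoot
    apply Set.Infinite.mono _ (Set.Ioi_infinite (0:ℝ))
    intro y hy
    have hy : (0:ℝ) < y := hy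
    have hs : 0 < Real.sqrt (1 + y) := Real.sqrt_pos.2 (by linarith)
    have hx2 : ((Real.sqrt (1+y))⁻¹)^2 = (1+y)⁻¹ := by
      rw [inv_pow, Real.sq_sqrt (by linarith)]
    set x := (Real.sqrt (1+y))⁻¹ with hx
    have hx0 : 0 < x := inv_pos.2 hs
    have h1 : 1 - x^2 = x^2 * y := by
      rw [hx2]; field_simp; ring
    have hh := h x
    have : ∑ k ∈ Finset.range (n / 2 + 1), c k * x ^ (n - 2 * k) * (1 - x ^ 2) ^ k = x^n * p.eval y := by
      rw [hp, Polynomial.eval_finset_sum, Finset.mul_sum]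
      apply Finset.sum_congr rfl
      intro k hk
      have hk : 2 * k ≤ n := by
        have := Finset.mem_range.1 hk
        omega
      rw [h1, Polynomial.eval_monomial, mul_pow, ← pow_mul]
      have : x^n = x^(n-2*k) * x^(2*k) := by rw [← pow_add]; congr 1; omega
      rw [this]; ring
    rw [this] at hh
    exact (mul_eq_zero.1 hh).resolve_left (by positivity)
  intro k hk
  have := congrArg (fun q => Polynomial.coeff q k) hz
  simp only [hp, Polynomial.finset_sum_coeff, Polynomial.coeff_monomial, Polynomial.coeff_zero] at this
  rw [Finset.sum_ite_eq' ] at this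
  simpa [Nat.lt_succ_of_le hk] using this

/-- **Expansion of the elephant polynomials in the basis `x^{n-2k} (1-x²)^k`.**
For `α ∈ [0,1]` and `n ≥ 1` there are unique coefficients `λ_{n,k}`,
`k = 0, 1, …, ⌊n/2⌋`, with
`R_n(x) = Σ_{k=0}^{⌊n/2⌋} (-1)^k λ_{n,k} x^{n-2k} (1-x²)^k`; they are non-negative and
satisfy `e^{-(1-α)n/(3+α)} C(n, 2k) α^k ≤ λ_{n,k} ≤ C(n, 2k) α^k`. -/
theorem elephantPoly_basis_coeffs (α : ℝ) (hα : α ∈ Set.Icc (0 : ℝ) 1)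
    (n : ℕ) (hn : 1 ≤ n) :
    ∃ lam : ℕ → ℝ,
      ((∀ k : ℕ, n / 2 < k → lam k = 0) ∧
        (∀ x : ℝ, (elephantPoly α n).eval x
          = ∑ k ∈ Finset.range (n / 2 + 1),
              (-1 : ℝ) ^ k * lam k * x ^ (n - 2 * k) * (1 - x ^ 2) ^ k)) ∧
      (∀ lam' : ℕ → ℝ,
        ((∀ k : ℕ, n / 2 < k → lam' k = 0) ∧
          (∀ x : ℝ, (elephantPoly α n).eval x
            = ∑ k ∈ Finset.range (n / 2 + 1),
                (-1 : ℝ) ^ k * lam' k * x ^ (n - 2 * k) * (1 - x ^ 2) ^ k)) →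
        lam' = lam) ∧
      (∀ k : ℕ, k ≤ n / 2 →
        0 ≤ lam k ∧
        Real.exp (-((1 - α) * n) / (3 + α)) * (n.choose (2 * k)) * α ^ k ≤ lam k ∧
        lam k ≤ (n.choose (2 * k)) * α ^ k) := by
  obtain ⟨h0, h1⟩ := hα
  have hE : ∀ x : ℝ, (elephantPoly α n).eval x
          = ∑ k ∈ Finset.range (n / 2 + 1),
              (-1 : ℝ) ^ k * lamL α n k * x ^ (n - 2 * k) * (1 - x ^ 2) ^ k := by
    intro x
    rw [expansion α n hn, Polynomial.eval_finset_sum]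
    symm
    have : ∀ k ∈ Finset.range (n+1), Polynomial.eval x (C ((-1)^k * lamL α n k) * (X ^ (n - 2*k) * (1 - X^2)^k))
      = (-1 : ℝ) ^ k * lamL α n k * x ^ (n - 2 * k) * (1 - x ^ 2) ^ k := by
      intro k _
      simp
      ring
    rw [Finset.sum_congr rfl this]
    apply Finset.sum_subset
    · intro k hk
      simp only [Finset.mem_range] at *
      omega
    · intro k _ hk
      simp only [Finset.mem_range] at hk
      rw [lamL_eq_zero α n hn k (by omega)]
      ring
  refine ⟨lamL α n, ⟨fun k hk => lamL_eq_zero α n hn k (by omega), hE⟩, ?_, ?_⟩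
  · rintro lam' ⟨hz, he⟩
    have hu := uniq_aux n (fun k => (-1)^k * (lam' k - lamL α n k)) (by
      intro x
      have e := (he x).symm.trans (hE x)
      rw [← sub_eq_zero, ← Finset.sum_sub_distrib] at e
      rw [← e]
      apply Finset.sum_congr rfl
      intro k _
      ring)
    funext k
    rcases Nat.lt_or_ge (n/2) k with h | h
    · rw [hz k h, lamL_eq_zero α n hn k (by omega)]
    · have := hu k h
      have h2 : ((-1:ℝ))^k ≠ 0 := pow_ne_zero _ (by norm_num)
      exact sub_eq_zero.1 ((mul_eq_zero.1 this).resolve_left h2)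
  · intro k hk
    have U := lam_upper α h0 h1 n hn k
    refine ⟨U.1, ?_, U.2⟩
    set t := (1 - α) / (3 + α) with ht
    have h3 : 0 < 3 + α := by linarith
    have ht0 : 0 ≤ t := div_nonneg (by linarith) h3.le
    have ht1 : t ≤ 1/3 := by rw [ht, div_le_iff₀ h3]; linarith
    have hαt : α * (1 + t) = 1 - 3 * t := by rw [ht]; field_simp; ring
    have he : -((1 - α) * (n:ℝ)) / (3 + α) = -(t * n) := by rw [ht]; ring
    rw [he]
    have hA : 0 ≤ ((n.choose (2*k) : ℕ) : ℝ) * α^k := by positivity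
    rcases Nat.lt_or_ge n 3 with h | h
    · have hL : ((n.choose (2*k) : ℕ) : ℝ) * α^k ≤ lamL α n k := by
        have : n = 1 ∨ n = 2 := by omega
        rcases this with rfl | rfl
        · obtain rfl : k = 0 := by omega
          simp [lamL]
        · have : k = 0 ∨ k = 1 := by omega
          rcases this with rfl | rfl
          · simp [lamL]
          · simp [lamL]
      have hx : Real.exp (-(t * n)) ≤ 1 := Real.exp_le_one_iff.2 (by
        have : 0 ≤ t * n := by positivity
        linarith)
      rw [mul_assoc]
      exact (mul_le_of_le_one_left hA hx).trans hL
    · refine le_trans ?_ (lam_lower α t h0 h1 hαt ht0 ht1 n h k)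
      rw [mul_assoc, mul_assoc]
      refine mul_le_mul_of_nonneg_right ?_ hA
      unfold Gf
      have hn3 : (3:ℝ) ≤ n := by exact_mod_cast h
      have hkn : (2:ℝ) * k ≤ n := by
        have : 2 * k ≤ n := by omega
        exact_mod_cast this
      have hp : 0 ≤ Hh n (2*(2*k)-n) := div_nonneg (P6_nonneg n _ hn3 (by linarith)) (by positivity)
      have : 0 ≤ t * Hh n (2*(2*k)-n) := mul_nonneg ht0 hp
      have hx := Real.exp_pos (-(t * (n:ℝ)))
      nlinarith
end

section
/- Let α ∈ [0,1), let 𝔽_n be the percolated random recursive forest with percolation parameter α, and let (R_n)_{n≥1} be the elephant polynomials with parameter α. Then for every n ≥ 1, iⁿ·R_n(0) = ℙ(every connected component (cluster) of 𝔽_n has even size). In particular, R_n(0) = 0 when n is odd. -/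
open MeasureTheory ProbabilityTheory Filter Polynomial
open scoped ENNReal NNReal

namespace RRF

variable {Ω : Type*} [MeasurableSpace Ω]

/-- The family combining `(ξ_n)` and `(u_n)`, with values in `Bool ⊕ ℕ`. -/
def fam (ξ : ℕ → Ω → Bool) (u : ℕ → Ω → ℕ) : (ℕ ⊕ ℕ) → Ω → (Bool ⊕ ℕ)
  | .inl n => fun ω => .inl (ξ n ω)
  | .inr n => fun ω => .inr (u n ω)

/-- The driving randomness of the percolated random recursive forest with percolation
parameter `α`: `(ξ_n)_{n ≥ 2}` are i.i.d. Bernoulli(α) (an edge `(n, u_n)` is kept iff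
`ξ_n = 1`), `(u_n)_{n ≥ 2}` are independent with `u_n` uniform on `{1, …, n-1}`, and the
two families are jointly independent. -/
structure IsForestDriving (P : Measure Ω) (α : ℝ)
    (ξ : ℕ → Ω → Bool) (u : ℕ → Ω → ℕ) : Prop where
  meas_ξ : ∀ n, Measurable (ξ n)
  meas_u : ∀ n, Measurable (u n)
  ξ_law : ∀ n, 2 ≤ n → P {ω | ξ n ω = true} = ENNReal.ofReal α
  u_range : ∀ n, 2 ≤ n → ∀ ω, 1 ≤ u n ω ∧ u n ω < n
  u_law : ∀ n, 2 ≤ n → ∀ k, 1 ≤ k → k < n → P {ω | u n ω = k} = ((n - 1 : ℕ) : ℝ≥0∞)⁻¹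
  indep : iIndepFun (fam ξ u) P


/-- The root of the cluster containing the vertex `j` in the percolated random recursive
forest: climb the retained parent edges `j ↦ u_j` (an edge is retained iff `ξ_j = 1`)
until reaching a vertex with no retained parent edge.  (The value `u_j` is clamped to
`j - 1`; this is irrelevant since `1 ≤ u_j < j` holds surely.) -/
noncomputable def rootOf (ξ : ℕ → Ω → Bool) (u : ℕ → Ω → ℕ) (ω : Ω) : ℕ → ℕ
  | 0 => 0
  | 1 => 1
  | j + 2 =>
      if ξ (j + 2) ω then rootOf ξ u ω (min (u (j + 2) ω) (j + 1)) else j + 2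
  termination_by j => j
  decreasing_by exact Nat.lt_succ_of_le (min_le_right _ _)

/-- Every connected component (cluster) of the forest `𝔽_n` has even size. -/
def AllClustersEven (ξ : ℕ → Ω → Bool) (u : ℕ → Ω → ℕ) (n : ℕ) (ω : Ω) : Prop :=
  ∀ j : ℕ, 1 ≤ j → j ≤ n →
    Even (Set.ncard {i : ℕ | 1 ≤ i ∧ i ≤ n ∧ rootOf ξ u ω i = rootOf ξ u ω j})

end RRF

open RRF

namespace RRFProof

/-- Size of the cluster with root `r` among vertices `1..n`. -/
def cs (ρ : ℕ → ℕ) (n r : ℕ) : ℕ := ((Finset.Icc 1 n).filter (fun i => ρ i = r)).card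

/-- The product of Chebyshev polynomials over clusters. -/
noncomputable def PF (ρ : ℕ → ℕ) (n : ℕ) : ℝ[X] :=
  ∏ r ∈ Finset.Icc 1 n, Chebyshev.T ℝ (cs ρ n r : ℤ)

/-- The product after attaching a new vertex to vertex `k`. -/
noncomputable def GF (ρ : ℕ → ℕ) (n k : ℕ) : ℝ[X] :=
  ∏ r ∈ Finset.Icc 1 n, Chebyshev.T ℝ ((cs ρ n r + if ρ k = r then 1 else 0 : ℕ) : ℤ)

lemma cs_succ (ρ : ℕ → ℕ) (n r : ℕ) :
    cs ρ (n + 1) r = cs ρ n r + if ρ (n + 1) = r then 1 else 0 := by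
  unfold cs
  rw [← Finset.insert_Icc_right_eq_Icc_add_one (by omega : 1 ≤ n + 1), Finset.filter_insert]
  split_ifs with h
  · rw [Finset.card_insert_of_notMem (by simp)]
  · rfl

lemma cs_zero (ρ : ℕ → ℕ) (n : ℕ) (h : ∀ i, 1 ≤ i → i ≤ n → ρ i ≤ n) :
    cs ρ n (n + 1) = 0 := by
  unfold cs
  rw [Finset.card_eq_zero, Finset.filter_eq_empty_iff]
  intro i hi
  rw [Finset.mem_Icc] at hi
  have := h i hi.1 hi.2
  omega

lemma PF_new (ρ : ℕ → ℕ) (n : ℕ) (h : ∀ i, 1 ≤ i → i ≤ n → ρ i ≤ n) (h1 : ρ (n + 1) = n + 1) :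
    PF ρ (n + 1) = X * PF ρ n := by
  unfold PF
  rw [Finset.prod_Icc_succ_top (by omega), cs_succ, cs_zero ρ n h, h1]
  rw [mul_comm]
  congr 1
  · simp
  · apply Finset.prod_congr rfl
    intro r hr
    rw [Finset.mem_Icc] at hr
    rw [cs_succ, h1, if_neg (by omega), add_zero]

lemma PF_old (ρ : ℕ → ℕ) (n k : ℕ) (h : ∀ i, 1 ≤ i → i ≤ n → ρ i ≤ n)
    (hk : 1 ≤ k) (hk' : k ≤ n) (h1 : ρ (n + 1) = ρ k) :
    PF ρ (n + 1) = GF ρ n k := by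
  unfold PF GF
  have := h k hk hk'
  rw [Finset.prod_Icc_succ_top (by omega), cs_succ, cs_zero ρ n h, h1, if_neg (by omega)]
  simp [cs_succ, h1]

lemma cheb (s : ℕ) : (s : ℝ[X]) * Chebyshev.T ℝ ((s + 1 : ℕ) : ℤ) =
    (s : ℝ[X]) * (X * Chebyshev.T ℝ (s : ℤ))
      - (1 - X ^ 2) * derivative (Chebyshev.T ℝ (s : ℤ)) := by
  have h1 := Chebyshev.T_eq_X_mul_T_sub_pol_U ℝ ((s : ℤ) - 1)
  have h2 := Chebyshev.T_derivative_eq_U (R := ℝ) (s : ℤ)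
  rw [h2]
  rw [show (s : ℤ) - 1 + 2 = ((s + 1 : ℕ) : ℤ) by push_cast; ring, sub_add_cancel] at h1
  rw [h1]
  push_cast
  ring

lemma sum_cs (ρ : ℕ → ℕ) (n : ℕ) (h : ∀ i, 1 ≤ i → i ≤ n → 1 ≤ ρ i ∧ ρ i ≤ i) :
    ∑ r ∈ Finset.Icc 1 n, cs ρ n r = n := by
  unfold cs
  rw [← Finset.card_eq_sum_card_fiberwise]
  · simp
  · intro i hi
    simp only [Finset.coe_Icc, Set.mem_Icc] at hi ⊢
    have := h i hi.1 hi.2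
    omega

lemma sum_GF (ρ : ℕ → ℕ) (n : ℕ) (h : ∀ i, 1 ≤ i → i ≤ n → 1 ≤ ρ i ∧ ρ i ≤ i) :
    ∑ k ∈ Finset.Icc 1 n, GF ρ n k =
      (n : ℝ[X]) * (X * PF ρ n) - (1 - X ^ 2) * derivative (PF ρ n) := by
  have hm : ∀ k ∈ Finset.Icc 1 n, ρ k ∈ Finset.Icc 1 n := by
    intro i hi
    simp only [Finset.mem_Icc] at hi ⊢
    have := h i hi.1 hi.2
    omega
  have hG : ∀ k ∈ Finset.Icc 1 n, GF ρ n k =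
      (fun r => (∏ a ∈ (Finset.Icc 1 n).erase r, Chebyshev.T ℝ (cs ρ n a : ℤ)) *
        Chebyshev.T ℝ ((cs ρ n r + 1 : ℕ) : ℤ)) (ρ k) := by
    intro k hk
    unfold GF
    rw [← Finset.prod_erase_mul _ _ (hm k hk)]
    simp only [if_true]
    congr 1
    apply Finset.prod_congr rfl
    intro a ha
    rw [if_neg (Finset.ne_of_mem_erase ha).symm, add_zero]
  rw [Finset.sum_congr rfl hG, ← Finset.sum_fiberwise_of_maps_to hm]
  have h2 : ∀ r ∈ Finset.Icc 1 n, (∑ k ∈ Finset.Icc 1 n with ρ k = r,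
      (fun r => (∏ a ∈ (Finset.Icc 1 n).erase r, Chebyshev.T ℝ (cs ρ n a : ℤ)) *
        Chebyshev.T ℝ ((cs ρ n r + 1 : ℕ) : ℤ)) (ρ k)) =
      (cs ρ n r : ℝ[X]) * (X * PF ρ n) - (1 - X ^ 2) *
        ((∏ a ∈ (Finset.Icc 1 n).erase r, Chebyshev.T ℝ (cs ρ n a : ℤ)) *
          derivative (Chebyshev.T ℝ (cs ρ n r : ℤ))) := by
    intro r hr
    have e : ∀ k ∈ (Finset.Icc 1 n).filter (fun k => ρ k = r),
      (fun r => (∏ a ∈ (Finset.Icc 1 n).erase r, Chebyshev.T ℝ (cs ρ n a : ℤ)) *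
        Chebyshev.T ℝ ((cs ρ n r + 1 : ℕ) : ℤ)) (ρ k) =
       ((∏ a ∈ (Finset.Icc 1 n).erase r, Chebyshev.T ℝ (cs ρ n a : ℤ)) *
        Chebyshev.T ℝ ((cs ρ n r + 1 : ℕ) : ℤ)) := by
      intro k hk
      rw [(Finset.mem_filter.mp hk).2]
    rw [Finset.sum_congr rfl e, Finset.sum_const, nsmul_eq_mul]
    have e2 : PF ρ n = (∏ a ∈ (Finset.Icc 1 n).erase r, Chebyshev.T ℝ (cs ρ n a : ℤ)) *
        Chebyshev.T ℝ (cs ρ n r : ℤ) := by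
      unfold PF
      rw [Finset.prod_erase_mul _ _ hr]
    rw [e2]
    have := cheb (cs ρ n r)
    change (cs ρ n r : ℝ[X]) * _ = _
    linear_combination (∏ a ∈ (Finset.Icc 1 n).erase r, Chebyshev.T ℝ (cs ρ n a : ℤ)) * this
  rw [Finset.sum_congr rfl h2, Finset.sum_sub_distrib, ← Finset.sum_mul, ← Finset.mul_sum,
    ← Nat.cast_sum, sum_cs ρ n h]
  congr 2
  unfold PF
  rw [derivative_prod_finset]

lemma T_zero_I (s : ℕ) : Complex.I ^ s * (((Chebyshev.T ℝ (s : ℤ)).eval 0 : ℝ) : ℂ) =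
    if Even s then 1 else 0 := by
  split_ifs with h
  · obtain ⟨m, rfl⟩ := h
    have : ((m + m : ℕ) : ℤ) = 2 * (m : ℤ) := by push_cast; ring
    rw [this, Chebyshev.T_eval_two_mul_zero, ← two_mul, pow_mul, Complex.I_sq,
      Int.negOnePow_def]
    simp [← mul_pow]
  · rw [Chebyshev.T_eval_zero_of_odd]
    · simp
    · exact_mod_cast Nat.not_even_iff_odd.mp h

lemma PF_zero (ρ : ℕ → ℕ) (n : ℕ) [Decidable (∀ r ∈ Finset.Icc 1 n, Even (cs ρ n r))]
    (h : ∀ i, 1 ≤ i → i ≤ n → 1 ≤ ρ i ∧ ρ i ≤ i) :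
    Complex.I ^ n * (((PF ρ n).eval 0 : ℝ) : ℂ) =
      if ∀ r ∈ Finset.Icc 1 n, Even (cs ρ n r) then 1 else 0 := by
  unfold PF
  have : Complex.I ^ n = ∏ r ∈ Finset.Icc 1 n, Complex.I ^ (cs ρ n r) := by
    rw [Finset.prod_pow_eq_pow_sum, sum_cs ρ n h]
  rw [this, eval_prod, Complex.ofReal_prod, ← Finset.prod_mul_distrib]
  simp only [T_zero_I]
  rw [Finset.prod_ite_zero, Finset.prod_const_one]
  congr 1

lemma even_iff (ρ : ℕ → ℕ) (n : ℕ) (h : ∀ i, 1 ≤ i → i ≤ n → 1 ≤ ρ i ∧ ρ i ≤ i) :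
    (∀ j : ℕ, 1 ≤ j → j ≤ n → Even (Set.ncard {i : ℕ | 1 ≤ i ∧ i ≤ n ∧ ρ i = ρ j})) ↔
      ∀ r ∈ Finset.Icc 1 n, Even (cs ρ n r) := by
  have e : ∀ r, Set.ncard {i : ℕ | 1 ≤ i ∧ i ≤ n ∧ ρ i = r} = cs ρ n r := by
    intro r
    unfold cs
    rw [← Set.ncard_coe_finset]
    congr 1
    ext i
    simp [and_assoc]
  simp only [e]
  constructor
  · intro H r hr
    by_cases h0 : cs ρ n r = 0
    · simp [h0]
    · obtain ⟨i, hi⟩ := Finset.card_pos.mp (Nat.pos_of_ne_zero h0)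
      rw [Finset.mem_filter, Finset.mem_Icc] at hi
      rw [← hi.2]
      exact H i hi.1.1 hi.1.2
  · intro H j hj hj'
    have := h j hj hj'
    exact H _ (Finset.mem_Icc.mpr ⟨this.1, by omega⟩)

section prob
variable {Ω : Type*} [MeasurableSpace Ω]

lemma fam_meas {P : Measure Ω} {α : ℝ} {ξ : ℕ → Ω → Bool} {u : ℕ → Ω → ℕ}
    (hd : IsForestDriving P α ξ u) (i : ℕ ⊕ ℕ) : Measurable (fam ξ u i) := by
  rcases i with i | i
  · exact measurable_inl.comp (hd.meas_ξ i)
  · exact measurable_inr.comp (hd.meas_u i)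

instance : MeasurableSingletonClass (Bool ⊕ ℕ) where
  measurableSet_singleton x := by
    rcases x with x | x
    · rw [← Set.image_singleton]
      exact MeasurableSet.inl_image (measurableSet_singleton x)
    · rw [← Set.image_singleton]
      exact MeasurableSet.inr_image (measurableSet_singleton x)

/-- `f` depends on the driving variables with index at most `n`. -/
def Dep {β : Type*} (ξ : ℕ → Ω → Bool) (u : ℕ → Ω → ℕ) (n : ℕ) (f : Ω → β) : Prop :=
  ∀ ω ω', (∀ i ≤ n, ξ i ω = ξ i ω' ∧ u i ω = u i ω') → f ω = f ω'

/-- past indices -/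
def past (n : ℕ) : Finset (ℕ ⊕ ℕ) := (Finset.range (n + 1)).disjSum (Finset.range (n + 1))

/-- new indices -/
def fresh (n : ℕ) : Finset (ℕ ⊕ ℕ) := {Sum.inl (n + 1), Sum.inr (n + 1)}

lemma Dep.factor {ξ : ℕ → Ω → Bool} {u : ℕ → Ω → ℕ} {n : ℕ} {f : Ω → ℝ} (hf : Dep ξ u n f) :
    ∃ g : (past n → Bool ⊕ ℕ) → ℝ, f = g ∘ (fun ω (i : past n) => fam ξ u i ω) := by
  refine ⟨Function.extend (fun ω (i : past n) => fam ξ u i ω) f 0, ?_⟩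
  have : Function.FactorsThrough f (fun ω (i : past n) => fam ξ u i ω) := by
    intro ω ω' h
    apply hf
    intro i hi
    have h1 := congrFun h ⟨Sum.inl i, by simp [past]; omega⟩
    have h2 := congrFun h ⟨Sum.inr i, by simp [past]; omega⟩
    simp only [fam, Sum.inl.injEq, Sum.inr.injEq] at h1 h2
    exact ⟨h1, h2⟩
  funext ω
  simp only [Function.comp]
  rw [this.extend_apply]

lemma Dep.measurable {P : Measure Ω} {α : ℝ} {ξ : ℕ → Ω → Bool} {u : ℕ → Ω → ℕ}
    (hd : IsForestDriving P α ξ u) {n : ℕ} {f : Ω → ℝ} (hf : Dep ξ u n f) : Measurable f := by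
  obtain ⟨g, rfl⟩ := hf.factor
  exact (measurable_of_countable g).comp (measurable_pi_lambda _ fun i => fam_meas hd i)

lemma Dep.indep_integral {P : Measure Ω} {α : ℝ} {ξ : ℕ → Ω → Bool} {u : ℕ → Ω → ℕ}
    (hd : IsForestDriving P α ξ u) {n : ℕ} {f : Ω → ℝ} (hf : Dep ξ u n f)
    (B : Bool → ℕ → Prop) [∀ b k, Decidable (B b k)] :
    ∫ ω, (if B (ξ (n + 1) ω) (u (n + 1) ω) then (1 : ℝ) else 0) * f ω ∂P =
      P.real {ω | B (ξ (n + 1) ω) (u (n + 1) ω)} * ∫ ω, f ω ∂P := by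
  have hfm := hf.measurable hd
  obtain ⟨g, rfl⟩ := hf.factor
  have hdis : Disjoint (fresh n) (past n) := by
    rw [Finset.disjoint_left]
    intro a ha
    simp only [fresh, Finset.mem_insert, Finset.mem_singleton] at ha
    rcases ha with rfl | rfl <;> simp [past]
  have hI := hd.indep.indepFun_finset (fresh n) (past n) hdis (fam_meas hd)
  let φ : (fresh n → Bool ⊕ ℕ) → ℝ := fun v =>
    if B ((v ⟨Sum.inl (n + 1), by simp [fresh]⟩).elim id (fun _ => false))
      ((v ⟨Sum.inr (n + 1), by simp [fresh]⟩).elim (fun _ => 0) id) then 1 else 0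
  have hI2 := hI.comp (measurable_of_countable φ) (measurable_of_countable g)
  have hφm : Measurable (φ ∘ fun ω (i : fresh n) => fam ξ u i ω) :=
    (measurable_of_countable φ).comp (measurable_pi_lambda _ fun i => fam_meas hd i)
  have key := hI2.integral_mul_eq_mul_integral hφm.aestronglyMeasurable hfm.aestronglyMeasurable
  have hφ : (φ ∘ fun ω (i : fresh n) => fam ξ u i ω) =
      fun ω => if B (ξ (n + 1) ω) (u (n + 1) ω) then (1 : ℝ) else 0 := by
    funext ω
    simp only [φ, fam, Function.comp]
    rfl
  rw [hφ] at key hφm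
  have hs : MeasurableSet {ω | B (ξ (n + 1) ω) (u (n + 1) ω)} := by
    have := hφm (measurableSet_singleton 1)
    convert! this using 1
    ext ω
    by_cases hB : B (ξ (n + 1) ω) (u (n + 1) ω) <;> simp [hB]
  have hint : ∫ ω, (if B (ξ (n + 1) ω) (u (n + 1) ω) then (1 : ℝ) else 0) ∂P =
      P.real {ω | B (ξ (n + 1) ω) (u (n + 1) ω)} := by
    rw [← integral_indicator_one hs]
    congr 1
    funext ω
    by_cases hB : B (ξ (n + 1) ω) (u (n + 1) ω) <;> simp [hB]
  rw [hint] at key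
  exact key

lemma prob_new {P : Measure Ω} [IsProbabilityMeasure P] {α : ℝ} (hα : 0 ≤ α)
    {ξ : ℕ → Ω → Bool} {u : ℕ → Ω → ℕ}
    (hd : IsForestDriving P α ξ u) {n : ℕ} (hn : 1 ≤ n) :
    P.real {ω | ξ (n + 1) ω = false} = 1 - α := by
  have h1 : P.real {ω | ξ (n + 1) ω = true} = α := by
    rw [measureReal_def, hd.ξ_law _ (by omega), ENNReal.toReal_ofReal hα]
  have hm : MeasurableSet {ω | ξ (n + 1) ω = true} :=
    hd.meas_ξ (n + 1) (measurableSet_singleton true)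
  have := probReal_compl_eq_one_sub (μ := P) hm
  rw [h1] at this
  rw [← this]
  congr 1
  ext ω
  simp

lemma prob_old {P : Measure Ω} [IsProbabilityMeasure P] {α : ℝ} (hα : 0 ≤ α)
    {ξ : ℕ → Ω → Bool} {u : ℕ → Ω → ℕ}
    (hd : IsForestDriving P α ξ u) {n : ℕ} (hn : 1 ≤ n) {k : ℕ} (hk : 1 ≤ k) (hk' : k ≤ n) :
    P.real {ω | ξ (n + 1) ω = true ∧ u (n + 1) ω = k} = α / n := by
  have hI := hd.indep.indepFun (i := Sum.inl (n + 1)) (j := Sum.inr (n + 1)) (by simp)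
  have := hI.measure_inter_preimage_eq_mul {Sum.inl true} {Sum.inr k}
    (measurableSet_singleton _) (measurableSet_singleton _)
  have e1 : fam ξ u (Sum.inl (n + 1)) ⁻¹' {Sum.inl true} = {ω | ξ (n + 1) ω = true} := by
    ext; simp [fam]
  have e2 : fam ξ u (Sum.inr (n + 1)) ⁻¹' {Sum.inr k} = {ω | u (n + 1) ω = k} := by
    ext; simp [fam]
  rw [e1, e2, hd.ξ_law _ (by omega), hd.u_law _ (by omega) k hk (by omega)] at this
  rw [measureReal_def, Set.ofPred_and, this, ENNReal.toReal_mul, ENNReal.toReal_ofReal hα]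
  simp [div_eq_mul_inv]

lemma root_bound {P : Measure Ω} {α : ℝ} {ξ : ℕ → Ω → Bool} {u : ℕ → Ω → ℕ}
    (hd : IsForestDriving P α ξ u) (ω : Ω) (i : ℕ) (hi : 1 ≤ i) :
    1 ≤ rootOf ξ u ω i ∧ rootOf ξ u ω i ≤ i := by
  induction i using Nat.strong_induction_on with
  | _ i ih =>
    match i, hi with
    | 1, _ => simp [rootOf]
    | j + 2, _ =>
      rw [rootOf]
      have hu := hd.u_range (j + 2) (by omega) ω
      split_ifs with h
      · have := ih (min (u (j + 2) ω) (j + 1)) (by omega) (by omega)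
        omega
      · omega

lemma root_dep {ξ : ℕ → Ω → Bool} {u : ℕ → Ω → ℕ} (n i : ℕ) (hi : i ≤ n) :
    Dep ξ u n (fun ω => rootOf ξ u ω i) := by
  intro ω ω' h
  induction i using Nat.strong_induction_on with
  | _ i ih =>
    match i, hi with
    | 0, _ => simp [rootOf]
    | 1, _ => simp [rootOf]
    | j + 2, hj =>
      simp only
      rw [rootOf, rootOf, (h _ hj).1, (h _ hj).2]
      split_ifs with h
      · exact ih _ (by omega) (by omega)
      · rfl

/-- `h` only depends on the values on `{1..n}`. -/
def Loc {β : Type*} (n : ℕ) (h : (ℕ → ℕ) → β) : Prop :=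
  ∀ ρ ρ', (∀ i, 1 ≤ i → i ≤ n → ρ i = ρ' i) → h ρ = h ρ'

lemma Loc.dep {β : Type*} {n : ℕ} {h : (ℕ → ℕ) → β} (hh : Loc n h)
    (ξ : ℕ → Ω → Bool) (u : ℕ → Ω → ℕ) : Dep ξ u n (fun ω => h (rootOf ξ u ω)) := by
  intro ω ω' H
  exact hh _ _ fun i _ hi => root_dep n i hi ω ω' H

lemma Loc.integrable {P : Measure Ω} [IsProbabilityMeasure P] {α : ℝ}
    {ξ : ℕ → Ω → Bool} {u : ℕ → Ω → ℕ}
    (hd : IsForestDriving P α ξ u) {n : ℕ} {h : (ℕ → ℕ) → ℝ} (hh : Loc n h) :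
    Integrable (fun ω => h (rootOf ξ u ω)) P := by
  have hm := (hh.dep ξ u).measurable hd
  have hfin : (Set.range (fun v : Fin (n + 1) → Fin (n + 1) =>
      ‖h (fun i => if hi : i < n + 1 then (v ⟨i, hi⟩ : ℕ) else 0)‖)).Finite := Set.finite_range _
  obtain ⟨C, hC⟩ := hfin.bddAbove
  refine Integrable.of_bound hm.aestronglyMeasurable C (ae_of_all _ fun ω => ?_)
  apply hC
  refine ⟨fun i => ⟨min (rootOf ξ u ω i) n, by omega⟩, ?_⟩
  simp only
  congr 1
  apply hh
  intro i h1 h2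
  have := root_bound hd ω i h1
  rw [dif_pos (by omega)]
  exact min_eq_left (by omega)

lemma cs_loc (n r : ℕ) : Loc n (fun ρ => cs ρ n r) := by
  intro ρ ρ' h
  unfold cs
  simp only
  congr 1
  apply Finset.filter_congr
  intro i hi
  rw [Finset.mem_Icc] at hi
  rw [h i hi.1 hi.2]

lemma PF_loc (n : ℕ) : Loc n (fun ρ => PF ρ n) := by
  intro ρ ρ' h
  unfold PF
  simp only
  apply Finset.prod_congr rfl
  intro r _
  have := cs_loc n r ρ ρ' h
  simp only at this
  rw [this]

lemma GF_loc (n k : ℕ) (hk : 1 ≤ k) (hk' : k ≤ n) : Loc n (fun ρ => GF ρ n k) := by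
  intro ρ ρ' h
  unfold GF
  simp only
  apply Finset.prod_congr rfl
  intro r _
  have := cs_loc n r ρ ρ' h
  simp only at this
  rw [this, h k hk hk']

lemma Loc.comp {β γ : Type*} {n : ℕ} {h : (ℕ → ℕ) → β} (hh : Loc n h) (g : β → γ) :
    Loc n (fun ρ => g (h ρ)) := fun ρ ρ' H => congrArg g (hh ρ ρ' H)

lemma decomp {P : Measure Ω} {α : ℝ} {ξ : ℕ → Ω → Bool} {u : ℕ → Ω → ℕ}
    (hd : IsForestDriving P α ξ u) {n : ℕ} (hn : 1 ≤ n) (L : ℝ[X] →ₗ[ℝ] ℝ) (ω : Ω) :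
    L (PF (rootOf ξ u ω) (n + 1)) =
      (if ξ (n + 1) ω = false then (1 : ℝ) else 0) * L (X * PF (rootOf ξ u ω) n) +
      ∑ k ∈ Finset.Icc 1 n, (if ξ (n + 1) ω = true ∧ u (n + 1) ω = k then (1 : ℝ) else 0) *
        L (GF (rootOf ξ u ω) n k) := by
  have hb : ∀ i, 1 ≤ i → i ≤ n → rootOf ξ u ω i ≤ n := fun i h1 h2 =>
    (root_bound hd ω i h1).2.trans h2
  obtain ⟨m, rfl⟩ : ∃ m, n = m + 1 := ⟨n - 1, by omega⟩
  have hu : 1 ≤ u (m + 1 + 1) ω ∧ u (m + 1 + 1) ω < m + 1 + 1 :=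
    hd.u_range (m + 1 + 1) (by omega) ω
  cases hx : ξ (m + 1 + 1) ω with
  | false =>
    have : rootOf ξ u ω (m + 1 + 1) = m + 1 + 1 := by
      rw [rootOf]; simp [hx]
    rw [PF_new _ _ hb this]
    simp
  | true =>
    have : rootOf ξ u ω (m + 1 + 1) = rootOf ξ u ω (u (m + 1 + 1) ω) := by
      rw [rootOf, if_pos hx, min_eq_left (Nat.lt_succ_iff.mp hu.2)]
    rw [PF_old _ _ _ hb hu.1 (by omega) this]
    simp only [Bool.true_eq_false, if_false, zero_mul, zero_add, true_and, ite_mul, one_mul]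
    rw [Finset.sum_ite_eq, if_pos (Finset.mem_Icc.mpr ⟨hu.1, by omega⟩)]

lemma main_identity {P : Measure Ω} [IsProbabilityMeasure P] {α : ℝ} (hα : 0 ≤ α)
    {ξ : ℕ → Ω → Bool} {u : ℕ → Ω → ℕ}
    (hd : IsForestDriving P α ξ u) {n : ℕ} (hn : 1 ≤ n) :
    ∀ L : ℝ[X] →ₗ[ℝ] ℝ, L (elephantPoly α n) = ∫ ω, L (PF (rootOf ξ u ω) n) ∂P := by
  induction n, hn using Nat.le_induction with
  | base =>
    intro L
    have : ∀ ω, PF (rootOf ξ u ω) 1 = X := by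
      intro ω
      simp [PF, cs, rootOf, Finset.filter_singleton]
    simp [this, elephantPoly]
  | succ n hn ih =>
    intro L
    have hn0 : (n : ℝ) ≠ 0 := by positivity
    let D : ℝ[X] →ₗ[ℝ] ℝ[X] :=
      LinearMap.mulLeft ℝ X - LinearMap.mulLeft ℝ (C (α / n) * (1 - X ^ 2)) ∘ₗ derivative
    have hD : ∀ p, D p = X * p - C (α / n) * ((1 - X ^ 2) * derivative p) := by
      intro p
      simp [D, mul_assoc]
    have hrec : elephantPoly α (n + 1) = D (elephantPoly α n) := by
      obtain ⟨m, rfl⟩ : ∃ m, n = m + 1 := ⟨n - 1, by omega⟩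
      rw [hD, elephantPoly]
      push_cast
      rfl
    rw [hrec]
    have := ih (L ∘ₗ D)
    simp only [LinearMap.comp_apply] at this
    rw [this]
    simp_rw [decomp hd hn L]
    have lX : Loc n (fun ρ => L (X * PF ρ n)) := (PF_loc n).comp fun p => L (X * p)
    have lG : ∀ k ∈ Finset.Icc 1 n, Loc n (fun ρ => L (GF ρ n k)) := fun k hk =>
      (GF_loc n k (Finset.mem_Icc.mp hk).1 (Finset.mem_Icc.mp hk).2).comp L
    have intInd : ∀ (B : Bool → ℕ → Prop) [∀ b k, Decidable (B b k)] (h : (ℕ → ℕ) → ℝ), Loc n h →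
        Integrable (fun ω => (if B (ξ (n + 1) ω) (u (n + 1) ω) then (1 : ℝ) else 0) *
          h (rootOf ξ u ω)) P := by
      intro B _ h hh
      have hm : Measurable (fun ω => if B (ξ (n + 1) ω) (u (n + 1) ω) then (1 : ℝ) else 0) :=
        (measurable_of_countable (fun p : Bool × ℕ => if B p.1 p.2 then (1 : ℝ) else 0)).comp
          ((hd.meas_ξ (n + 1)).prodMk (hd.meas_u (n + 1)))
      refine (hh.integrable hd).bdd_mul (c := 1) hm.aestronglyMeasurable (ae_of_all _ fun ω => ?_)
      split_ifs <;> simp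
    rw [integral_add (intInd (fun b _ => b = false) _ lX)
      (integrable_finsetSum _ fun k hk => intInd (fun b v => b = true ∧ v = k) _ (lG k hk)),
      integral_finsetSum _ fun k hk => intInd (fun b v => b = true ∧ v = k) _ (lG k hk)]
    have i1 := (lX.dep ξ u).indep_integral hd (fun b _ => b = false)
    rw [prob_new hα hd hn] at i1
    have i2 : ∀ k ∈ Finset.Icc 1 n,
        ∫ ω, (if ξ (n + 1) ω = true ∧ u (n + 1) ω = k then (1 : ℝ) else 0) *
          L (GF (rootOf ξ u ω) n k) ∂P = α / n * ∫ ω, L (GF (rootOf ξ u ω) n k) ∂P := by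
      intro k hk
      have := ((lG k hk).dep ξ u).indep_integral hd (fun b v => b = true ∧ v = k)
      rw [prob_old hα hd hn (Finset.mem_Icc.mp hk).1 (Finset.mem_Icc.mp hk).2] at this
      rw [← this]
    have i1' : ∫ ω, (if ξ (n + 1) ω = false then (1 : ℝ) else 0) *
          L (X * PF (rootOf ξ u ω) n) ∂P = (1 - α) * ∫ ω, L (X * PF (rootOf ξ u ω) n) ∂P := by
      rw [← i1]
    rw [i1', Finset.sum_congr rfl i2, ← Finset.mul_sum,
      ← integral_finsetSum _ fun k hk => (lG k hk).integrable hd, ← integral_const_mul,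
      ← integral_const_mul, ← integral_add ((lX.integrable hd).const_mul _)
        ((integrable_finsetSum _ fun k hk => (lG k hk).integrable hd).const_mul _)]
    congr 1
    funext ω
    rw [← map_sum, sum_GF _ _ fun i h1 _ => root_bound hd ω i h1, hD, map_sub, map_sub,
      ← smul_eq_C_mul, map_smul, ← nsmul_eq_mul, map_nsmul, smul_eq_mul, nsmul_eq_mul]
    field_simp
    ring

end prob

end RRFProof


/-- **The elephant polynomials at `0` and even clusters of the percolated random
recursive forest.**  For `α ∈ [0,1)`,
`iⁿ R_n(0) = ℙ(every cluster of 𝔽_n has even size)` for every `n ≥ 1`; in particular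
`R_n(0) = 0` when `n` is odd. -/
theorem elephantPoly_zero_even_clusters
    {Ω : Type*} [MeasurableSpace Ω] (P : Measure Ω) [IsProbabilityMeasure P]
    (α : ℝ) (hα0 : 0 ≤ α) (hα1 : α < 1)
    (ξ : ℕ → Ω → Bool) (u : ℕ → Ω → ℕ) (hdrive : IsForestDriving P α ξ u)
    (n : ℕ) (hn : 1 ≤ n) :
    Complex.I ^ n * (((elephantPoly α n).eval 0 : ℝ) : ℂ)
        = (((P {ω | AllClustersEven ξ u n ω}).toReal : ℝ) : ℂ) ∧
      (Odd n → (elephantPoly α n).eval 0 = 0) := by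
  have hb := fun ω i (h1 : 1 ≤ i) (_ : i ≤ n) => RRFProof.root_bound hdrive ω i h1
  have key := RRFProof.main_identity hα0 hdrive hn (Polynomial.leval 0)
  simp only [Polynomial.leval_apply] at key
  have hI : Complex.I ^ n * (((elephantPoly α n).eval 0 : ℝ) : ℂ)
        = (((P {ω | AllClustersEven ξ u n ω}).toReal : ℝ) : ℂ) := by
    classical
    rw [key, ← integral_complex_ofReal, ← integral_const_mul]
    have e : ∀ ω, Complex.I ^ n * (((RRFProof.PF (rootOf ξ u ω) n).eval 0 : ℝ) : ℂ) =
        (((if AllClustersEven ξ u n ω then 1 else 0 : ℝ)) : ℂ) := by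
      intro ω
      rw [RRFProof.PF_zero _ _ (hb ω)]
      have := RRFProof.even_iff _ _ (hb ω)
      unfold AllClustersEven
      simp only [this]
      split_ifs <;> simp
    simp_rw [e]
    have hloc : RRFProof.Loc n (fun ρ => if ∀ r ∈ Finset.Icc 1 n, Even (RRFProof.cs ρ n r)
        then (1 : ℝ) else 0) := by
      intro ρ ρ' h
      have := fun r => RRFProof.cs_loc n r ρ ρ' h
      simp only at this
      simp only [this]
      congr 1
    have hm := (hloc.dep ξ u).measurable hdrive
    have hs : MeasurableSet {ω | AllClustersEven ξ u n ω} := by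
      convert! hm (measurableSet_singleton 1) using 1
      ext ω
      have := RRFProof.even_iff _ _ (hb ω)
      simp only [Set.mem_ofPred_eq, Set.mem_preimage, Set.mem_singleton_iff]
      unfold AllClustersEven
      rw [this]
      by_cases h : ∀ r ∈ Finset.Icc 1 n, Even (RRFProof.cs (rootOf ξ u ω) n r)
      · rw [if_pos h]; exact ⟨fun _ => rfl, fun _ => h⟩
      · rw [if_neg h]; exact ⟨fun h' => absurd h' h, fun h' => absurd h' (by norm_num)⟩
    rw [integral_complex_ofReal, ← measureReal_def, ← integral_indicator_one hs]
    rfl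
  refine ⟨hI, ?_⟩
  rintro ⟨k, rfl⟩
  rw [pow_succ, pow_mul, Complex.I_sq] at hI
  have him := congrArg Complex.im hI
  rcases neg_one_pow_eq_or ℂ k with h | h <;> rw [h] at him <;> simpa using him
end
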